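/- Assume M > N and Q ≤ M. Let σ : ℝ → ℝ be a strictly monotone continuous bijection from ℝ onto the open interval (0, ∞) (a diffeomorphism ℝ → ℝ₊), extended coordinatewise to a map ℝ^M → (0,∞)^M. Let X⁰ ∈ ℝ^{M×N} have rank N, let Y ∈ ℝ^{Q×N} be the target matrix, let L ≥ 1, and let W_2, …, W_L ∈ ℝ^{M×M} be arbitrary given invertible matrices. Then there exist W_1 ∈ ℝ^{M×M}, W_{L+1} ∈ ℝ^{Q×M}, and bias vectors b_1, …, b_L ∈ ℝ^M, b_{L+1} ∈ ℝ^Q such that, defining recursively X^{(ℓ)}_i = σ(W_ℓ X^{(ℓ−1)}_i + b_ℓ) for ℓ = 1, …, L (with X^{(0)}_i the i-th column of X⁰), one has W_{L+1} X^{(L)}_i + b_{L+1} = Y_i for every i = 1, …, N. -/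

import Mathlib

open Matrix

/-- Hidden-layer recursion: `fwd M σ W b ℓ x` is the output `X^{(ℓ)}` of the `ℓ`-th hidden
layer on input `x = X^{(0)}`, where `W ℓ`, `b ℓ` (0-based) are the weight and bias of the
`(ℓ+1)`-st hidden layer. -/
def fwd (M : ℕ) (σ : (Fin M → ℝ) → Fin M → ℝ)
    (W : ℕ → Matrix (Fin M) (Fin M) ℝ) (b : ℕ → Fin M → ℝ) :
    ℕ → (Fin M → ℝ) → Fin M → ℝ
  | 0, x => x
  | ℓ + 1, x => σ ((W ℓ).mulVec (fwd M σ W b ℓ x) + b ℓ)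

/-!
An affine map can be prescribed freely on affinely independent points. Hence the output layer fits
any targets once the last hidden layer maps the inputs to affinely independent points, and the
first layer can send the inputs to any prescribed preactivations. The fixed layers in between
are solved backwards: to hit finitely many points `t i` in the range of `σ`, take `σ`-preimages
`u i`, and pull them back through the invertible weight `W` to `W⁻¹ u i + d`. The common shift `d`
pushes these points into the range of `σ`, and the bias `-W d` undoes it. A suitable target for the
last hidden layer is a translate of the inputs themselves.
-/

section Interpolation

variable {K V W ι : Type*} [DivisionRing K] [AddCommGroup V] [Module K V]
  [AddCommGroup W] [Module K W]

theorem exists_linearMap_apply_eq_of_linearIndependent {v : ι → V} (hv : LinearIndependent K v)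
    (w : ι → W) : ∃ f : V →ₗ[K] W, ∀ i, f (v i) = w i := by
  obtain ⟨g, hg⟩ := (Finsupp.linearCombination K v).exists_leftInverse_of_injective
    (LinearMap.ker_eq_bot.mpr hv)
  refine ⟨Finsupp.linearCombination K w ∘ₗ g, fun i => ?_⟩
  have hgv : g (v i) = Finsupp.single i 1 := by
    simpa using LinearMap.congr_fun hg (Finsupp.single i 1)
  simp [hgv]

theorem exists_linearMap_apply_add_eq_of_affineIndependent {p : ι → V}
    (hp : AffineIndependent K p) (q : ι → W) :
    ∃ (f : V →ₗ[K] W) (c : W), ∀ i, f (p i) + c = q i := by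
  rcases isEmpty_or_nonempty ι with _ | ⟨⟨i₀⟩⟩
  · exact ⟨0, 0, isEmptyElim⟩
  obtain ⟨f, hf⟩ := exists_linearMap_apply_eq_of_linearIndependent
    ((affineIndependent_iff_linearIndependent_vsub K p i₀).mp hp) fun i => q i - q i₀
  refine ⟨f, q i₀ - f (p i₀), fun i => ?_⟩
  rcases eq_or_ne i i₀ with rfl | hi
  · exact add_sub_cancel _ _
  · have hfi : f (p i) - f (p i₀) = q i - q i₀ := by simpa using hf ⟨i, hi⟩
    rw [add_sub_left_comm, hfi, add_sub_cancel]

end Interpolation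

theorem exists_mulVec_add_eq_of_affineIndependent {K ι m n : Type*} [Field K] [Fintype n]
    {p : ι → n → K} (hp : AffineIndependent K p) (q : ι → m → K) :
    ∃ (A : Matrix m n K) (c : m → K), ∀ i, A *ᵥ p i + c = q i := by
  classical
  obtain ⟨f, c, hf⟩ := exists_linearMap_apply_add_eq_of_affineIndependent hp q
  exact ⟨f.toMatrix', c, by simpa only [LinearMap.toMatrix'_mulVec] using hf⟩

theorem linearIndependent_col_of_rank_eq_card {K m n : Type*} [Field K] [Fintype n]
    {A : Matrix m n K} (hA : A.rank = Fintype.card n) : LinearIndependent K A.col :=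
  linearIndependent_iff_card_eq_finrank_span.mpr (hA.symm.trans A.rank_eq_finrank_span_cols)

theorem exists_forall_le_add {ι G : Type*} [Finite ι] [AddCommGroup G] [Lattice G]
    [IsOrderedAddMonoid G] (a : G) (v : ι → G) : ∃ d, ∀ i, a ≤ v i + d := by
  obtain ⟨m, hm⟩ := (Set.finite_range v).bddBelow
  refine ⟨a - m, fun i => ?_⟩
  calc a = m + (a - m) := (add_sub_cancel m a).symm
    _ ≤ v i + (a - m) := by gcongr; exact hm (Set.mem_range_self i)

theorem Ici_subset_range_piMap {ι : Type*} {α β : ι → Type*} [∀ i, Preorder (β i)]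
    {f : ∀ i, α i → β i} {a : ∀ i, β i} (hf : ∀ i, Set.Ici (a i) ⊆ Set.range (f i)) :
    Set.Ici a ⊆ Set.range (Pi.map f) := by
  rw [Set.range_piMap, ← Set.pi_univ_Ici]
  exact Set.pi_mono fun i _ => hf i

section HiddenLayers

variable {M : ℕ} {ι : Type*} [Finite ι] {σ : (Fin M → ℝ) → Fin M → ℝ} {a : Fin M → ℝ}

theorem exists_bias_forall_layer_eq (hσ : Set.Ici a ⊆ Set.range σ)
    {W : Matrix (Fin M) (Fin M) ℝ} (hW : IsUnit W) {t : ι → Fin M → ℝ}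
    (ht : ∀ i, t i ∈ Set.range σ) :
    ∃ (c : Fin M → ℝ) (s : ι → Fin M → ℝ),
      (∀ i, s i ∈ Set.range σ) ∧ ∀ i, σ (W *ᵥ s i + c) = t i := by
  choose u hu using ht
  obtain ⟨V, hWV⟩ := hW.exists_right_inv
  obtain ⟨d, hd⟩ := exists_forall_le_add a fun i => V *ᵥ u i
  refine ⟨-(W *ᵥ d), fun i => V *ᵥ u i + d, fun i => hσ (hd i), fun i => ?_⟩
  rw [mulVec_add, mulVec_mulVec, hWV, one_mulVec, add_neg_cancel_right, hu]

theorem fwd_update_bias_of_le (W : ℕ → Matrix (Fin M) (Fin M) ℝ) (b : ℕ → Fin M → ℝ)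
    (c x : Fin M → ℝ) {k n : ℕ} (hnk : n ≤ k) :
    fwd M σ W (Function.update b k c) n x = fwd M σ W b n x := by
  induction n with
  | zero => rfl
  | succ n ih => rw [fwd, fwd, ih (by omega), Function.update_of_ne (by omega)]

theorem exists_fwd_succ_eq (hσ : Set.Ici a ⊆ Set.range σ) {x : ι → Fin M → ℝ}
    (hx : AffineIndependent ℝ x) {W : ℕ → Matrix (Fin M) (Fin M) ℝ} {n : ℕ}
    (hW : ∀ ℓ, 1 ≤ ℓ → ℓ ≤ n → IsUnit (W ℓ)) {t : ι → Fin M → ℝ}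
    (ht : ∀ i, t i ∈ Set.range σ) :
    ∃ (W₁ : Matrix (Fin M) (Fin M) ℝ) (b : ℕ → Fin M → ℝ),
      ∀ i, fwd M σ (Function.update W 0 W₁) b (n + 1) (x i) = t i := by
  induction n generalizing t with
  | zero =>
    choose u hu using ht
    obtain ⟨W₁, c, hc⟩ := exists_mulVec_add_eq_of_affineIndependent hx u
    exact ⟨W₁, fun _ => c, fun i => by simp only [fwd, Function.update_self, hc, hu]⟩
  | succ n ih =>
    obtain ⟨c, s, hs, hst⟩ :=
      exists_bias_forall_layer_eq hσ (hW (n + 1) (by omega) le_rfl) ht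
    obtain ⟨W₁, b, hb⟩ := ih (fun ℓ hℓ hℓn => hW ℓ hℓ (by omega)) hs
    refine ⟨W₁, Function.update b (n + 1) c, fun i => ?_⟩
    rw [fwd, fwd_update_bias_of_le _ _ _ _ le_rfl, hb, Function.update_self,
      Function.update_of_ne n.succ_ne_zero, hst]

theorem exists_affineIndependent_fwd (hσ : Set.Ici a ⊆ Set.range σ) {x : ι → Fin M → ℝ}
    (hx : AffineIndependent ℝ x) {W : ℕ → Matrix (Fin M) (Fin M) ℝ} {L : ℕ}
    (hW : ∀ ℓ, 1 ≤ ℓ → ℓ < L → IsUnit (W ℓ)) :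
    ∃ (W₁ : Matrix (Fin M) (Fin M) ℝ) (b : ℕ → Fin M → ℝ),
      AffineIndependent ℝ fun i => fwd M σ (Function.update W 0 W₁) b L (x i) := by
  cases L with
  | zero => exact ⟨0, 0, hx⟩
  | succ n =>
    obtain ⟨d, hd⟩ := exists_forall_le_add a x
    obtain ⟨W₁, b, hb⟩ := exists_fwd_succ_eq hσ hx
      (fun ℓ hℓ hℓn => hW ℓ hℓ (Nat.lt_succ_of_le hℓn)) fun i => hσ (hd i)
    have hfwd : (fun i => fwd M σ (Function.update W 0 W₁) b (n + 1) (x i)) = d +ᵥ x :=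
      funext fun i => (hb i).trans (add_comm (x i) d)
    exact ⟨W₁, b, hfwd ▸ (affineIndependent_vadd ℝ).mpr hx⟩

end HiddenLayers

theorem deep_network_zero_loss_fixed_hidden_weights_general {M L : ℕ} {ι κ : Type*}
    {σ : (Fin M → ℝ) → Fin M → ℝ} {a : Fin M → ℝ} (hσ : Set.Ici a ⊆ Set.range σ)
    {x : ι → Fin M → ℝ} (hx : AffineIndependent ℝ x) (y : ι → κ → ℝ)
    (Wgiven : ℕ → Matrix (Fin M) (Fin M) ℝ)
    (hWgiven : ∀ ℓ, 1 ≤ ℓ → ℓ < L → IsUnit (Wgiven ℓ)) :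
    ∃ (W : ℕ → Matrix (Fin M) (Fin M) ℝ) (b : ℕ → Fin M → ℝ)
      (Wout : Matrix κ (Fin M) ℝ) (bout : κ → ℝ),
      (∀ ℓ, 1 ≤ ℓ → ℓ < L → W ℓ = Wgiven ℓ) ∧
        ∀ i, Wout *ᵥ fwd M σ W b L (x i) + bout = y i := by
  have : Finite ι := finite_of_fin_dim_affineIndependent ℝ hx
  obtain ⟨W₁, b, hfwd⟩ := exists_affineIndependent_fwd hσ hx hWgiven
  obtain ⟨Wout, bout, hout⟩ := exists_mulVec_add_eq_of_affineIndependent hfwd y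
  exact ⟨Function.update Wgiven 0 W₁, b, Wout, bout,
    fun ℓ hℓ _ => Function.update_of_ne (by omega) _ _, hout⟩

theorem deep_network_zero_loss_fixed_hidden_weights {M N Q L : ℕ}
    (hMN : N < M) (hQM : Q ≤ M) (hL : 1 ≤ L)
    (σ : ℝ → ℝ) (hmono : StrictMono σ ∨ StrictAnti σ) (hcont : Continuous σ)
    (hrange : Set.range σ = Set.Ioi (0 : ℝ))
    (X0 : Matrix (Fin M) (Fin N) ℝ) (hrank : X0.rank = N)
    (Y : Matrix (Fin Q) (Fin N) ℝ)
    (Wgiven : ℕ → Matrix (Fin M) (Fin M) ℝ)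
    (hWgiven : ∀ ℓ, 1 ≤ ℓ → ℓ < L → IsUnit (Wgiven ℓ)) :
    ∃ (W : ℕ → Matrix (Fin M) (Fin M) ℝ) (b : ℕ → Fin M → ℝ)
      (Wout : Matrix (Fin Q) (Fin M) ℝ) (bout : Fin Q → ℝ),
      (∀ ℓ, 1 ≤ ℓ → ℓ < L → W ℓ = Wgiven ℓ) ∧
        ∀ i : Fin N,
          Wout.mulVec (fwd M (fun v k => σ (v k)) W b L (fun j => X0 j i)) + bout =
            fun q => Y q i := by
  have hσ : Set.Ici 1 ⊆ Set.range σ := hrange ▸ Set.Ici_subset_Ioi.mpr one_pos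
  have hX0 : LinearIndependent ℝ X0.col := linearIndependent_col_of_rank_eq_card (by simpa)
  exact deep_network_zero_loss_fixed_hidden_weights_general
    (Ici_subset_range_piMap fun _ => hσ) hX0.affineIndependent Y.col Wgiven hWgiven
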